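/- Let a be an ideal of R with aM ≠ M and t = grade_M(a), and let I = (x_1, …, x_t) with x_1, …, x_t an M-regular sequence contained in a. Then Ass_R(H^t_a(M)) = Ass_R(Ext^t_R(R/a, M)) = V(a) ∩ Ass_R(M/IM). -/

import Mathlib

universe u

open RingTheory.Sequence CategoryTheory

noncomputable section

/-- `N :_M a`, set of `m : M` with `a • m ⊆ N`. -/
def Submodule.modColon {R : Type u} [CommRing R] {M : Type u} [AddCommGroup M] [Module R M]
    (N : Submodule R M) (a : Ideal R) : Submodule R M :=
  ⨅ r ∈ a, N.comap (LinearMap.lsmul R M r)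

/-- The ideals `a` and `b` are linked by `I` over `M`: `I ⊆ a ⊓ b` is generated by an
`M`-regular sequence, `bM = IM :_M a`, `aM = IM :_M b`, and `aM ≠ M ≠ bM`. -/
def Ideal.IsLinkedBy {R : Type u} [CommRing R] (M : Type u) [AddCommGroup M] [Module R M]
    (I a b : Ideal R) : Prop :=
  (∃ rs : List R, RingTheory.Sequence.IsRegular M rs ∧ I = Ideal.ofList rs) ∧
  I ≤ a ⊓ b ∧
  a • (⊤ : Submodule R M) ≠ ⊤ ∧ b • (⊤ : Submodule R M) ≠ ⊤ ∧
  Submodule.modColon (I • (⊤ : Submodule R M)) a = b • (⊤ : Submodule R M) ∧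
  Submodule.modColon (I • (⊤ : Submodule R M)) b = a • (⊤ : Submodule R M)

/-- Cohomological dimension `cd(a, M) = sup { i | H^i_a(M) ≠ 0 }`. -/
def cohDim {R : Type u} [CommRing R] (a : Ideal R) (M : Type u) [AddCommGroup M]
    [Module R M] : ℕ∞ :=
  sSup {n : ℕ∞ | ∃ i : ℕ, n = i ∧ Nontrivial ↥((localCohomology a i).obj (ModuleCat.of R M))}

/-- `grade_M(a)`: the supremum of lengths of `M`-regular sequences contained in `a`. -/
def gradeM {R : Type u} [CommRing R] (a : Ideal R) (M : Type u) [AddCommGroup M]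
    [Module R M] : ℕ :=
  sSup {n : ℕ | ∃ rs : List R, rs.length = n ∧ (∀ r ∈ rs, r ∈ a) ∧
    RingTheory.Sequence.IsRegular M rs}

variable {R : Type u} [CommRing R] [IsNoetherianRing R]
variable {M : Type u} [AddCommGroup M] [Module R M] [Module.Finite R M] [Nontrivial M]

/-!
Let `I = (x₁, …, x_t)` and `Q = M/IM`. The connecting classes of the extensions
`0 ⟶ M ⟶ M ⟶ M/x₁M ⟶ 0`, `0 ⟶ M/x₁M ⟶ M/x₁M ⟶ M/(x₁, x₂)M ⟶ 0`, … compose to a class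
`ξ ∈ Ext^t(Q, M)`. If each `xᵢ` acts nilpotently on `N`, then `Ext^i(N, M) = 0` for `i < t`, so the
long exact sequences make `f ↦ f ∘ ξ : Hom(N, Q) → Ext^t(N, M)` injective, with range the elements
killed by all `xᵢ`.

For `N = R/a` this gives `Ext^t(R/a, M) ≅ Hom(R/a, Q) ≅ Q[a]`, the `a`-torsion of `Q`. For
`N = R/aⁿ` it reduces the transition maps of `H^t_a(M) = colim Ext^t(R/aⁿ, M)` to those between
`Hom(R/aⁿ, Q) ≅ Q[aⁿ]`, which are inclusions; as `a` is finitely generated, `Ext^t(R/a, M)` is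
therefore the `a`-torsion of `H^t_a(M)`. It remains to use `Ass X[a] = V(a) ∩ Ass X` and the fact
that every element of `H^t_a(M)` is killed by a power of `a`.
-/

section TorsionOf

variable {S X Z : Type*} [Semiring S] [AddCommMonoid X] [AddCommMonoid Z] [Module S X] [Module S Z]

lemma torsionOf_le_torsionOf_map (f : X →ₗ[S] Z) (x : X) :
    Ideal.torsionOf S X x ≤ Ideal.torsionOf S Z (f x) := by
  intro r hr
  rw [Ideal.mem_torsionOf_iff] at hr ⊢
  rw [← map_smul, hr, map_zero]

lemma torsionOf_eq_of_injective {f : X →ₗ[S] Z} (hf : Function.Injective f) (x : X) :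
    Ideal.torsionOf S Z (f x) = Ideal.torsionOf S X x := by
  ext r
  rw [Ideal.mem_torsionOf_iff, Ideal.mem_torsionOf_iff, ← map_smul, map_eq_zero_iff f hf]

end TorsionOf

section AssociatedPrimes

variable {A : Type*} [CommRing A] {X Z : Type*} [AddCommGroup X] [Module A X] [AddCommGroup Z]
  [Module A Z] {a : Ideal A}

lemma mem_torsionBySet_iff_le_torsionOf {x : X} :
    x ∈ Submodule.torsionBySet A X a ↔ a ≤ Ideal.torsionOf A X x :=
  (Submodule.mem_torsionBySet_iff _ x).trans ⟨fun h r hr ↦ h ⟨r, hr⟩, fun h r ↦ h r.2⟩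

lemma mem_associatedPrimes_iff_eq_torsionOf [IsNoetherianRing A] {p : Ideal A} :
    p ∈ associatedPrimes A X ↔ p.IsPrime ∧ ∃ x : X, p = Ideal.torsionOf A X x := by
  have colon_eq (x : X) : (⊥ : Submodule A X).colon {x} = Ideal.torsionOf A X x := by
    ext r
    simp
  simp only [AssociatedPrimes.mem_iff, isAssociatedPrime_iff, colon_eq]

lemma associatedPrimes_eq_inter_of_range_eq_torsionBySet [IsNoetherianRing A] {f : X →ₗ[A] Z}
    (hf : Function.Injective f) (hrange : LinearMap.range f = Submodule.torsionBySet A Z a) :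
    associatedPrimes A X = {p | a ≤ p} ∩ associatedPrimes A Z := by
  ext p
  rw [Set.mem_inter_iff, Set.mem_ofPred_eq, mem_associatedPrimes_iff_eq_torsionOf,
    mem_associatedPrimes_iff_eq_torsionOf]
  constructor
  · rintro ⟨hp, x, rfl⟩
    refine ⟨?_, hp, f x, (torsionOf_eq_of_injective hf x).symm⟩
    rw [← torsionOf_eq_of_injective hf, ← mem_torsionBySet_iff_le_torsionOf, ← hrange]
    exact LinearMap.mem_range_self f x
  · rintro ⟨hap, hp, z, rfl⟩
    rw [← mem_torsionBySet_iff_le_torsionOf, ← hrange] at hap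
    obtain ⟨x, rfl⟩ := hap
    exact ⟨hp, x, torsionOf_eq_of_injective hf x⟩

lemma associatedPrimes_subset_of_exists_pow_le_torsionOf [IsNoetherianRing A]
    (h : ∀ x : X, ∃ n, a ^ n ≤ Ideal.torsionOf A X x) : associatedPrimes A X ⊆ {p | a ≤ p} := by
  intro p hp
  obtain ⟨hp, x, rfl⟩ := mem_associatedPrimes_iff_eq_torsionOf.1 hp
  obtain ⟨n, hn⟩ := h x
  exact hp.le_of_pow_le hn

end AssociatedPrimes

section CyclicModule

variable {R : Type u} [CommRing R]

/-- The projection `R/I ⟶ R/J` for `I ≤ J`, as a morphism of `R`-modules. -/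
def idealQuotientMap {I J : Ideal R} (h : I ≤ J) :
    ModuleCat.of R (R ⧸ I) ⟶ ModuleCat.of R (R ⧸ J) :=
  ModuleCat.ofHom (Submodule.mapQ I J LinearMap.id h)

lemma idealQuotientMap_comp {I J K : Ideal R} (hIJ : I ≤ J) (hJK : J ≤ K) :
    idealQuotientMap hIJ ≫ idealQuotientMap hJK = idealQuotientMap (hIJ.trans hJK) := by
  ext
  rfl

variable (J : Ideal R) (Q : ModuleCat.{u} R)

/-- Evaluation of homomorphisms `R/J ⟶ Q` at the generator `1`. -/
def quotientHomEval : (ModuleCat.of R (R ⧸ J) ⟶ Q) →ₗ[R] Q where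
  toFun f := f.hom (Submodule.Quotient.mk 1 : R ⧸ J)
  map_add' _ _ := rfl
  map_smul' _ _ := rfl

lemma quotientHomEval_injective : Function.Injective (quotientHomEval J Q) := fun _ _ hfg ↦
  ModuleCat.hom_ext (Submodule.linearMap_qext J (LinearMap.ext_ring hfg))

lemma range_quotientHomEval :
    LinearMap.range (quotientHomEval J Q) = Submodule.torsionBySet R Q J := by
  ext q
  rw [mem_torsionBySet_iff_le_torsionOf]
  constructor
  · rintro ⟨f, rfl⟩
    refine .trans (fun r hr ↦ ?_) (torsionOf_le_torsionOf_map f.hom (Submodule.Quotient.mk 1))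
    rw [Ideal.mem_torsionOf_iff, ← Submodule.Quotient.mk_smul, smul_eq_mul, mul_one]
    exact (Submodule.Quotient.mk_eq_zero J).2 hr
  · intro hq
    exact ⟨ModuleCat.ofHom (Submodule.liftQ J (LinearMap.toSpanSingleton R Q q) hq),
      one_smul R q⟩

variable {J Q}

lemma quotientHomEval_idealQuotientMap_comp {I : Ideal R} (h : I ≤ J)
    (f : ModuleCat.of R (R ⧸ J) ⟶ Q) :
    quotientHomEval I Q (idealQuotientMap h ≫ f) = quotientHomEval J Q f :=
  rfl

lemma exists_idealQuotientMap_comp_eq {I : Ideal R} (h : I ≤ J) (f : ModuleCat.of R (R ⧸ I) ⟶ Q)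
    (hf : J ≤ Ideal.torsionOf R _ f) : ∃ g, idealQuotientMap h ≫ g = f := by
  rw [← torsionOf_eq_of_injective (quotientHomEval_injective I Q),
    ← mem_torsionBySet_iff_le_torsionOf, ← range_quotientHomEval] at hf
  obtain ⟨g, hg⟩ := hf
  exact ⟨g, quotientHomEval_injective I Q hg⟩

end CyclicModule

section ExtComparison

open Limits Opposite Abelian

lemma homologyUnop_inv_naturality {ι V : Type*} [Category* V] [HasZeroMorphisms V]
    {c : ComplexShape ι} {K L : HomologicalComplex Vᵒᵖ c} (φ : K ⟶ L) (i : ι)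
    [K.HasHomology i] [L.HasHomology i] :
    (HomologicalComplex.homologyMap φ i).unop ≫ (K.homologyUnop i).inv =
      (L.homologyUnop i).inv ≫
        HomologicalComplex.homologyMap ((HomologicalComplex.unopFunctor V c).map φ.op) i := by
  have op_naturality := congrArg Quiver.Hom.unop (HomologicalComplex.homologyOp_hom_naturality
    ((HomologicalComplex.unopFunctor V c).map φ.op) i)
  exact (Iso.eq_inv_comp (L.homologyUnop i)).2
    ((Category.assoc ..).symm.trans ((Iso.comp_inv_eq (K.homologyUnop i)).2 op_naturality))

variable {R : Type*} [CommRing R] {C : Type*} [Category* C] [Abelian C] [Linear R C]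

variable (R) in
/-- Functoriality of `ChainComplex.linearYonedaObj` in the chain complex: precomposition with a
chain map `K ⟶ L` sends the cochain complex `Hom(L, Y)` to `Hom(K, Y)`. -/
def linearYonedaObjMap {K L : ChainComplex C ℕ} (φ : K ⟶ L) (Y : C) :
    L.linearYonedaObj R Y ⟶ K.linearYonedaObj R Y :=
  (HomologicalComplex.unopFunctor _ _).map
    ((((linearYoneda R C).obj Y).rightOp.mapHomologicalComplex _).map φ).op

lemma isoExt_hom_naturality [EnoughProjectives C] {X X' : C}
    {P : ProjectiveResolution X} {P' : ProjectiveResolution X'} {g : X ⟶ X'}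
    (φ : ProjectiveResolution.Hom P P' g) (Y : C) (n : ℕ) :
    ((_root_.Ext R C n).map g.op).app Y ≫ (P.isoExt n Y).hom =
      (P'.isoExt n Y).hom ≫ HomologicalComplex.homologyMap (linearYonedaObjMap R φ.hom Y) n := by
  let F := ((linearYoneda R C).obj Y).rightOp
  have derived_naturality := congrArg Quiver.Hom.unop
    (ProjectiveResolution.isoLeftDerivedObj_inv_naturality g P P' φ.hom
      (by simpa using φ.hom_f_zero_comp_π_f_zero) F n)
  have unop_naturality :=
    homologyUnop_inv_naturality ((F.mapHomologicalComplex _).map φ.hom) n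
  exact (congrArg (· ≫ (HomologicalComplex.homologyUnop _ n).inv) derived_naturality).trans
    (congrArg ((P'.isoLeftDerivedObj F n).inv.unop ≫ ·) unop_naturality)

variable {X : C} (P : ProjectiveResolution X) (Y : C) (n : ℕ)

variable (R) in
/-- The morphism `Kₙ ⟶ Y` underlying an `n`-cocycle of `Hom(K, Y)`. -/
def cocycleHom (K : ChainComplex C ℕ) : (K.linearYonedaObj R Y).cycles n →ₗ[R] (K.X n ⟶ Y) :=
  ((K.linearYonedaObj R Y).iCycles n).hom

lemma d_comp_cocycleHom (K : ChainComplex C ℕ) (z : (K.linearYonedaObj R Y).cycles n) :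
    K.d (n + 1) n ≫ cocycleHom R Y n K z = 0 :=
  ConcreteCategory.congr_hom ((K.linearYonedaObj R Y).iCycles_d n (n + 1)) z

lemma exists_cocycleHom_eq (K : ChainComplex C ℕ) (f : K.X n ⟶ Y) (hf : K.d (n + 1) n ≫ f = 0) :
    ∃ z, cocycleHom R Y n K z = f :=
  ⟨(K.linearYonedaObj R Y).cyclesMk f (n + 1) (by simp) hf,
    (K.linearYonedaObj R Y).i_cyclesMk (C := ModuleCat R) f (n + 1) (by simp) hf⟩

lemma homologyπ_eq_zero_iff {S : Type*} [Ring S] (K : CochainComplex (ModuleCat S) ℕ) {i j : ℕ}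
    (hij : (ComplexShape.up ℕ).prev j = i) (z : K.cycles j) :
    K.homologyπ j z = 0 ↔ ∃ g, K.d i j g = K.iCycles j z := by
  have exact : (ShortComplex.mk (K.toCycles i j) (K.homologyπ j) (by simp)).Exact :=
    ShortComplex.exact_of_g_is_cokernel _ (K.homologyIsCokernel i j hij)
  have injective : Function.Injective (K.iCycles j) :=
    (ModuleCat.mono_iff_injective _).1 inferInstance
  refine ((ShortComplex.ShortExact.moduleCat_exact_iff_function_exact _).1 exact z).trans
    (exists_congr fun g ↦ ?_)
  rw [← injective.eq_iff]
  simp [← ConcreteCategory.comp_apply]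

lemma extMk_zero_eq_zero_iff [HasExt C] {X Y : C} (P : ProjectiveResolution X)
    (f : P.complex.X 0 ⟶ Y) (hf : P.complex.d 1 0 ≫ f = 0) :
    P.extMk f 1 rfl hf = 0 ↔ f = 0 := by
  refine ⟨fun h ↦ ?_, fun h ↦ by simp [h]⟩
  rw [← P.extEquivCohomologyClass.apply_eq_iff_eq,
    ProjectiveResolution.extEquivCohomologyClass_extMk,
    ProjectiveResolution.extEquivCohomologyClass_zero,
    CochainComplex.HomComplex.CohomologyClass.mk_eq_zero_iff,
    CochainComplex.HomComplex.Cocycle.toSingleMk_mem_coboundaries_iff _ _ _ _ _ 1 (by simp)] at h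
  obtain ⟨g, hg⟩ := h
  have source_zero : IsZero (P.cochainComplex.X 1) :=
    CochainComplex.isZero_of_isStrictlyLE P.cochainComplex 0 1 (by simp)
  rw [source_zero.eq_of_src g 0, comp_zero] at hg
  rw [← cancel_epi (P.cochainComplexXIso (-(0 : ℕ)) 0 rfl).hom, ← hg, comp_zero]

variable [HasExt C]

variable (R) in
/-- The class in `Ext^n(X, Y)` of an `n`-cocycle of `Hom(P, Y)`, where `P` is a projective
resolution of `X`. -/
def extOfCycles : (P.complex.linearYonedaObj R Y).cycles n →ₗ[R] Abelian.Ext X Y n where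
  toFun z := P.extMk (cocycleHom R Y n P.complex z) (n + 1) rfl (d_comp_cocycleHom Y n P.complex z)
  map_add' z z' := by
    simp only [map_add, P.add_extMk]
  map_smul' r z := by
    simp only [map_smul, RingHom.id_apply, Abelian.Ext.smul_eq_comp_mk₀,
      ProjectiveResolution.extMk_comp_mk₀, Linear.comp_smul, Category.comp_id]

lemma extOfCycles_surjective : Function.Surjective (extOfCycles R P Y n) := by
  intro x
  obtain ⟨f, hf, rfl⟩ := P.extMk_surjective x (n + 1) rfl
  obtain ⟨z, rfl⟩ := exists_cocycleHom_eq (R := R) Y n P.complex f hf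
  exact ⟨z, rfl⟩

lemma ker_extOfCycles : LinearMap.ker (extOfCycles R P Y n) =
    LinearMap.ker ((P.complex.linearYonedaObj R Y).homologyπ n).hom := by
  ext z
  have hz := d_comp_cocycleHom Y n P.complex z
  cases n with
  | zero =>
    refine (extMk_zero_eq_zero_iff P _ hz).trans
      (.trans ?_ (homologyπ_eq_zero_iff _ CochainComplex.prev_nat_zero z).symm)
    simp only [ComplexShape.up_Rel, zero_add, one_ne_zero, not_false_eq_true,
      HomologicalComplex.shape, ModuleCat.hom_zero, LinearMap.zero_apply, exists_const]
    exact eq_comm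
  | succ n =>
    exact (P.extMk_eq_zero_iff _ _ rfl hz n rfl).trans
      (homologyπ_eq_zero_iff _ (CochainComplex.prev_nat_succ n) z).symm

variable (R) in
/-- The comparison of cochain cohomology of `Hom(P, Y)` with Mathlib's `Abelian.Ext`. -/
def homologyLinearEquivExt :
    (P.complex.linearYonedaObj R Y).homology n ≃ₗ[R] Abelian.Ext X Y n :=
  ((LinearMap.quotKerEquivOfSurjective ((P.complex.linearYonedaObj R Y).homologyπ n).hom
      ((ModuleCat.epi_iff_surjective _).1 inferInstance)).symm ≪≫ₗ
    Submodule.quotEquivOfEq _ _ (ker_extOfCycles P Y n).symm) ≪≫ₗ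
    LinearMap.quotKerEquivOfSurjective _ (extOfCycles_surjective P Y n)

lemma homologyLinearEquivExt_homologyπ (z : (P.complex.linearYonedaObj R Y).cycles n) :
    homologyLinearEquivExt R P Y n ((P.complex.linearYonedaObj R Y).homologyπ n z) =
      extOfCycles R P Y n z := by
  have symm_apply := LinearMap.quotKerEquivOfSurjective_symm_apply
    (f := ((P.complex.linearYonedaObj R Y).homologyπ n).hom) (x := z)
    ((ModuleCat.epi_iff_surjective _).1 inferInstance)
  simp [homologyLinearEquivExt, symm_apply]

lemma homologyLinearEquivExt_naturality {X' : C} {P : ProjectiveResolution X}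
    {P' : ProjectiveResolution X'} {g : X ⟶ X'} (φ : ProjectiveResolution.Hom P P' g)
    (z : (P'.complex.linearYonedaObj R Y).homology n) :
    homologyLinearEquivExt R P Y n
      (HomologicalComplex.homologyMap (linearYonedaObjMap R φ.hom Y) n z) =
    (Abelian.Ext.mk₀ g).comp (homologyLinearEquivExt R P' Y n z) (zero_add n) := by
  obtain ⟨z, rfl⟩ := (ModuleCat.epi_iff_surjective
    ((P'.complex.linearYonedaObj R Y).homologyπ n)).1 inferInstance z
  have cocycleHom_cyclesMap : cocycleHom R Y n P.complex
      (HomologicalComplex.cyclesMap (linearYonedaObjMap R φ.hom Y) n z) =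
        φ.hom.f n ≫ cocycleHom R Y n P'.complex z :=
    ConcreteCategory.congr_hom (HomologicalComplex.cyclesMap_i (linearYonedaObjMap R φ.hom Y) n) z
  rw [homologyLinearEquivExt_homologyπ, ← ConcreteCategory.comp_apply,
    HomologicalComplex.homologyπ_naturality, ConcreteCategory.comp_apply,
    homologyLinearEquivExt_homologyπ]
  refine .trans ?_ (P'.mk₀_comp_extMk _ (n + 1) rfl (d_comp_cocycleHom Y n P'.complex z) φ).symm
  simp only [← cocycleHom_cyclesMap]
  rfl

variable (R) in
/-- The left-derived `Ext R C n` agrees with Mathlib's `Abelian.Ext`. -/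
def extLinearEquiv [EnoughProjectives C] (X Y : C) (n : ℕ) :
    ((_root_.Ext R C n).obj (op X)).obj Y ≃ₗ[R] Abelian.Ext X Y n :=
  ((projectiveResolution X).isoExt n Y).toLinearEquiv ≪≫ₗ
    homologyLinearEquivExt R (projectiveResolution X) Y n

lemma extLinearEquiv_map_app [EnoughProjectives C] {X X' : C} (g : X ⟶ X') (Y : C) (n : ℕ)
    (z : ((_root_.Ext R C n).obj (op X')).obj Y) :
    extLinearEquiv R X Y n (((_root_.Ext R C n).map g.op).app Y z) =
      (Abelian.Ext.mk₀ g).comp (extLinearEquiv R X' Y n z) (zero_add n) := by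
  let φ : ProjectiveResolution.Hom (projectiveResolution X) (projectiveResolution X') g :=
    ⟨ProjectiveResolution.lift g _ _, by simpa using ProjectiveResolution.lift_commutes_zero g _ _⟩
  exact (congrArg (homologyLinearEquivExt R _ Y n)
    (ConcreteCategory.congr_hom (isoExt_hom_naturality φ Y n) z)).trans
    (homologyLinearEquivExt_naturality Y n φ _)

end ExtComparison

section RegularSequence

universe v w

open Abelian

variable {R : Type w} [CommRing R] [Small.{v} R] {M N : ModuleCat.{v} R}

lemma smul_ext_eq_zero_of_mem_annihilator {r : R} (hr : r ∈ Module.annihilator R N) {n : ℕ}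
    (z : Abelian.Ext N M n) : r • z = 0 := by
  have smul_id : r • 𝟙 N = 0 := by
    ext y
    exact Module.mem_annihilator.1 hr y
  simpa [Abelian.Ext.mk₀_smul] using
    congrArg (fun f ↦ (Abelian.Ext.mk₀ f).comp z (zero_add n)) smul_id

/-- The class of the extension `0 ⟶ M ⟶ M ⟶ M/rM ⟶ 0` given by an `M`-regular element `r`. -/
def smulExtClass {r : R} (hr : IsSMulRegular M r) :
    Abelian.Ext (ModuleCat.of R (QuotSMulTop r M)) M 1 :=
  hr.smulShortComplex_shortExact.extClass

lemma exists_comp_smulExtClass_eq {r : R} (hr : IsSMulRegular M r) {n : ℕ}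
    (z : Abelian.Ext N M (n + 1)) (hz : r • z = 0) :
    ∃ w : Abelian.Ext N (ModuleCat.of R (QuotSMulTop r M)) n,
      w.comp (smulExtClass hr) rfl = z :=
  Abelian.Ext.covariant_sequence_exact₁ N hr.smulShortComplex_shortExact z
    (by rwa [Abelian.Ext.smul_eq_comp_mk₀] at hz) rfl

lemma eq_zero_of_comp_smulExtClass_eq_zero {r : R} (hr : IsSMulRegular M r) {n : ℕ}
    [Subsingleton (Abelian.Ext N M n)] {w : Abelian.Ext N (ModuleCat.of R (QuotSMulTop r M)) n}
    (hw : w.comp (smulExtClass hr) (rfl : n + 1 = n + 1) = 0) : w = 0 := by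
  obtain ⟨v, rfl⟩ :=
    Abelian.Ext.covariant_sequence_exact₃ N hr.smulShortComplex_shortExact w rfl hw
  have v_eq_zero : v = (0 : Abelian.Ext N M n) := Subsingleton.elim (α := Abelian.Ext N M n) v 0
  rw [v_eq_zero]
  exact Abelian.Ext.zero_comp ..

lemma isSMulRegular_ext_zero {r : R} (hr : IsSMulRegular M r) (N : ModuleCat.{v} R) :
    IsSMulRegular (Abelian.Ext N M 0) r := by
  have : Mono (M.smulShortComplex r).f := hr.smulShortComplex_shortExact.mono_f
  intro x y hxy
  apply Abelian.Ext.postcomp_mk₀_injective_of_mono N (M.smulShortComplex r).f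
  simp only [Abelian.Ext.smul_eq_comp_mk₀] at hxy
  exact hxy

lemma isSMulRegular_ext_succ {r : R} (hr : IsSMulRegular M r) (n : ℕ)
    [Subsingleton (Abelian.Ext N (ModuleCat.of R (QuotSMulTop r M)) n)] :
    IsSMulRegular (Abelian.Ext N M (n + 1)) r := by
  refine (isSMulRegular_iff_right_eq_zero_of_smul).2 fun z hz ↦ ?_
  obtain ⟨w, rfl⟩ := exists_comp_smulExtClass_eq hr z hz
  rw [Subsingleton.elim w 0, Abelian.Ext.zero_comp]

lemma subsingleton_ext_of_isSMulRegular {r : R} {n : ℕ}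
    (hreg : IsSMulRegular (Abelian.Ext N M n) r) (hr : r ∈ (Module.annihilator R N).radical) :
    Subsingleton (Abelian.Ext N M n) := by
  obtain ⟨k, hk⟩ := hr
  refine subsingleton_of_forall_eq 0 fun z ↦ (hreg.pow k).right_eq_zero_of_smul ?_
  exact smul_ext_eq_zero_of_mem_annihilator hk z

lemma subsingleton_ext_of_lt_length {rs : List R} (hM : IsWeaklyRegular M rs)
    (hN : ∀ r ∈ rs, r ∈ (Module.annihilator R N).radical) {i : ℕ} (hi : i < rs.length) :
    Subsingleton (Abelian.Ext N M i) := by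
  induction rs generalizing M i with
  | nil => exact absurd hi (Nat.not_lt_zero i)
  | cons r rs ih =>
    obtain ⟨hr, hrs⟩ := (isWeaklyRegular_cons_iff M r rs).1 hM
    refine subsingleton_ext_of_isSMulRegular ?_ (hN r List.mem_cons_self)
    cases i with
    | zero => exact isSMulRegular_ext_zero hr N
    | succ i =>
      have := ih (M := ModuleCat.of R (QuotSMulTop r M)) hrs
        (fun s hs ↦ hN s (List.mem_cons_of_mem r hs)) (Nat.lt_of_succ_lt_succ hi)
      exact isSMulRegular_ext_succ hr i

/-- The iterated connecting class in `Ext^t(M/(r₁, …, r_t)M, M)` of a weakly `M`-regular sequence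
`r₁, …, r_t`. -/
def weaklyRegularExtClass : ∀ {M : ModuleCat.{v} R} {rs : List R}, IsWeaklyRegular M rs →
    Abelian.Ext (ModuleCat.of R (M ⧸ (Ideal.ofList rs • ⊤ : Submodule R M))) M rs.length
  | M, [], _ => Abelian.Ext.mk₀
      (Submodule.quotEquivOfEqBot (Ideal.ofList [] • ⊤ : Submodule R M) (by simp)).toModuleIso.hom
  | M, r :: rs, h =>
    have hr := (isWeaklyRegular_cons_iff M r rs).1 h
    (Abelian.Ext.mk₀
      (Submodule.quotOfListConsSMulTopEquivQuotSMulTopInner M r rs).toModuleIso.hom).comp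
        ((weaklyRegularExtClass (M := ModuleCat.of R (QuotSMulTop r M)) hr.2).comp
          (smulExtClass hr.1) rfl) (zero_add _)

/-- Precomposition of `weaklyRegularExtClass` with homomorphisms into `M/(r₁, …, r_t)M`. -/
def homToExt {rs : List R} (hM : IsWeaklyRegular M rs) (N : ModuleCat.{v} R) :
    (N ⟶ ModuleCat.of R (M ⧸ (Ideal.ofList rs • ⊤ : Submodule R M))) →ₗ[R]
      Abelian.Ext N M rs.length where
  toFun f := (Abelian.Ext.mk₀ f).comp (weaklyRegularExtClass hM) (zero_add _)
  map_add' f g := by rw [Abelian.Ext.mk₀_add, Abelian.Ext.add_comp]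
  map_smul' r f := by rw [Abelian.Ext.mk₀_smul, Abelian.Ext.smul_comp, RingHom.id_apply]

lemma homToExt_comp {rs : List R} (hM : IsWeaklyRegular M rs) {N N' : ModuleCat.{v} R}
    (g : N' ⟶ N) (f : N ⟶ ModuleCat.of R (M ⧸ (Ideal.ofList rs • ⊤ : Submodule R M))) :
    homToExt hM N' (g ≫ f) = (Abelian.Ext.mk₀ g).comp (homToExt hM N f) (zero_add _) :=
  (Abelian.Ext.mk₀_comp_mk₀_assoc g f _).symm

lemma homToExt_nil (hM : IsWeaklyRegular M ([] : List R))
    (f : N ⟶ ModuleCat.of R (M ⧸ (Ideal.ofList [] • ⊤ : Submodule R M))) :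
    homToExt hM N f = Abelian.Ext.mk₀ (f ≫ (Submodule.quotEquivOfEqBot
      (Ideal.ofList [] • ⊤ : Submodule R M) (by simp)).toModuleIso.hom) :=
  Abelian.Ext.mk₀_comp_mk₀ f _

lemma homToExt_cons {r : R} {rs : List R} (hM : IsWeaklyRegular M (r :: rs))
    (hr : IsSMulRegular M r) (hrs : IsWeaklyRegular (ModuleCat.of R (QuotSMulTop r M)) rs)
    (f : N ⟶ ModuleCat.of R (M ⧸ (Ideal.ofList (r :: rs) • ⊤ : Submodule R M))) :
    homToExt hM N f = (homToExt hrs N (f ≫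
      (Submodule.quotOfListConsSMulTopEquivQuotSMulTopInner M r rs).toModuleIso.hom)).comp
        (smulExtClass hr) rfl := by
  refine (Abelian.Ext.mk₀_comp_mk₀_assoc f _ _).trans ?_
  exact (Abelian.Ext.comp_assoc _ _ _ (zero_add _) rfl (by simp)).symm

theorem homToExt_injective {rs : List R} (hM : IsWeaklyRegular M rs)
    (hN : ∀ r ∈ rs, r ∈ (Module.annihilator R N).radical) :
    Function.Injective (homToExt hM N) := by
  rw [injective_iff_map_eq_zero]
  intro f hf
  induction rs generalizing M with
  | nil =>
    rw [homToExt_nil, Abelian.Ext.mk₀_eq_zero_iff] at hf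
    exact Limits.zero_of_comp_mono _ hf
  | cons r rs ih =>
    have : Subsingleton (Abelian.Ext N M rs.length) :=
      subsingleton_ext_of_lt_length hM hN (Nat.lt_succ_self _)
    obtain ⟨hr, hrs⟩ := (isWeaklyRegular_cons_iff M r rs).1 hM
    rw [homToExt_cons hM hr hrs] at hf
    exact Limits.zero_of_comp_mono _ (ih (M := ModuleCat.of R (QuotSMulTop r M)) hrs
      (fun s hs ↦ hN s (List.mem_cons_of_mem r hs)) _ (eq_zero_of_comp_smulExtClass_eq_zero hr hf))

theorem exists_homToExt_eq {rs : List R} (hM : IsWeaklyRegular M rs)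
    (hN : ∀ r ∈ rs, r ∈ (Module.annihilator R N).radical)
    (z : Abelian.Ext N M rs.length) (hz : ∀ r ∈ rs, r • z = 0) :
    ∃ f, homToExt hM N f = z := by
  induction rs generalizing M with
  | nil =>
    obtain ⟨f, rfl⟩ := (Abelian.Ext.mk₀_bijective N M).2 z
    refine ⟨f ≫ (Submodule.quotEquivOfEqBot _ (by simp)).toModuleIso.inv, ?_⟩
    rw [homToExt_nil, Category.assoc, Iso.inv_hom_id, Category.comp_id]
  | cons r rs ih =>
    have : Subsingleton (Abelian.Ext N M rs.length) :=
      subsingleton_ext_of_lt_length hM hN (Nat.lt_succ_self _)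
    obtain ⟨hr, hrs⟩ := (isWeaklyRegular_cons_iff M r rs).1 hM
    obtain ⟨w, rfl⟩ := exists_comp_smulExtClass_eq hr z (hz r List.mem_cons_self)
    have smul_w : ∀ s ∈ rs, s • w = 0 := fun s hs ↦ by
      refine eq_zero_of_comp_smulExtClass_eq_zero hr ?_
      rw [Abelian.Ext.smul_comp]
      exact hz s (List.mem_cons_of_mem r hs)
    obtain ⟨f, rfl⟩ := ih (M := ModuleCat.of R (QuotSMulTop r M)) hrs
      (fun s hs ↦ hN s (List.mem_cons_of_mem r hs)) w smul_w
    refine ⟨f ≫ (Submodule.quotOfListConsSMulTopEquivQuotSMulTopInner M r rs).toModuleIso.inv, ?_⟩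
    rw [homToExt_cons hM hr hrs, Category.assoc, Iso.inv_hom_id, Category.comp_id]

end RegularSequence

section LocalCohomology

open Limits Opposite Abelian

variable {R : Type u} [CommRing R]

/-- The map `Ext^i(R/J, Y) → Ext^i(R/I, Y)` induced by the projection `R/I → R/J`. -/
def extQuotientMap {I J : Ideal R} (h : I ≤ J) (Y : ModuleCat.{u} R) (i : ℕ) :
    Abelian.Ext (ModuleCat.of R (R ⧸ J)) Y i →ₗ[R] Abelian.Ext (ModuleCat.of R (R ⧸ I)) Y i :=
  (Abelian.Ext.mk₀ (idealQuotientMap h)).precompOfLinear R Y (zero_add i)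

lemma extQuotientMap_extQuotientMap {I J K : Ideal R} (hIJ : I ≤ J) (hJK : J ≤ K)
    {Y : ModuleCat.{u} R} {i : ℕ} (y : Abelian.Ext (ModuleCat.of R (R ⧸ K)) Y i) :
    extQuotientMap hIJ Y i (extQuotientMap hJK Y i y) = extQuotientMap (hIJ.trans hJK) Y i y :=
  (Abelian.Ext.mk₀_comp_mk₀_assoc (idealQuotientMap hIJ) (idealQuotientMap hJK) y).trans
    (congrArg (fun f ↦ (Abelian.Ext.mk₀ f).comp y (zero_add i)) (idealQuotientMap_comp hIJ hJK))

variable (a : Ideal R) (Y : ModuleCat.{u} R) (i : ℕ)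

/-- The diagram `n ↦ Ext^i(R/aⁿ, Y)` whose colimit is `H^i_a(Y)`. As in
`localCohomology.diagram`, the stage `n` is indexed by `op (op n)`. -/
def localCohomologyDiagram : ℕᵒᵖᵒᵖ ⥤ ModuleCat.{u} R :=
  localCohomology.diagram (localCohomology.idealPowersDiagram a) i ⋙ (evaluation _ _).obj Y

/-- The cocone exhibiting `H^i_a(Y)` as the colimit of `Ext^i(R/aⁿ, Y)`. -/
def localCohomologyCocone : Cocone (localCohomologyDiagram a Y i) :=
  have := localCohomology.hasColimitDiagram (localCohomology.idealPowersDiagram a) i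
  ((evaluation _ _).obj Y).mapCocone
    (colimit.cocone (localCohomology.diagram (localCohomology.idealPowersDiagram a) i))

/-- `H^i_a(Y)` is the colimit of `Ext^i(R/aⁿ, Y)`, because colimits of functors are computed
pointwise. -/
def isColimitLocalCohomologyCocone : IsColimit (localCohomologyCocone a Y i) :=
  have := localCohomology.hasColimitDiagram (localCohomology.idealPowersDiagram a) i
  isColimitOfPreserves _ (colimit.isColimit _)

instance preservesColimit_localCohomologyDiagram :
    PreservesColimit (localCohomologyDiagram a Y i) (forget (ModuleCat.{u} R)) :=
  have := preservesSmallestFilteredColimits_of_preservesFilteredColimits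
    (forget (ModuleCat.{u} R))
  inferInstance

/-- The terms of `localCohomologyDiagram`, as Mathlib's `Abelian.Ext`. -/
def localCohomologyDiagramEquiv (n : ℕ) : (localCohomologyDiagram a Y i).obj (op (op n)) ≃ₗ[R]
    Abelian.Ext (ModuleCat.of R (R ⧸ a ^ n)) Y i :=
  extLinearEquiv R (ModuleCat.of R (R ⧸ a ^ n)) Y i

lemma localCohomologyDiagramEquiv_map {m n : ℕ} (h : m ≤ n)
    (z : (localCohomologyDiagram a Y i).obj (op (op m))) :
    localCohomologyDiagramEquiv a Y i n
        ((localCohomologyDiagram a Y i).map (homOfLE h).op.op z) =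
      extQuotientMap (Ideal.pow_le_pow_right h) Y i (localCohomologyDiagramEquiv a Y i m z) :=
  extLinearEquiv_map_app (idealQuotientMap (Ideal.pow_le_pow_right h)) Y i z

/-- The canonical map `Ext^i(R/aⁿ, Y) → H^i_a(Y)`. -/
def extToLocalCohomology (n : ℕ) :
    Abelian.Ext (ModuleCat.of R (R ⧸ a ^ n)) Y i →ₗ[R] (localCohomology a i).obj Y :=
  ((localCohomologyCocone a Y i).ι.app (op (op n))).hom ∘ₗ
    (localCohomologyDiagramEquiv a Y i n).symm.toLinearMap

lemma extToLocalCohomology_localCohomologyDiagramEquiv {n : ℕ}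
    (z : (localCohomologyDiagram a Y i).obj (op (op n))) :
    extToLocalCohomology a Y i n (localCohomologyDiagramEquiv a Y i n z) =
      (localCohomologyCocone a Y i).ι.app (op (op n)) z :=
  congrArg ((localCohomologyCocone a Y i).ι.app (op (op n))) (LinearEquiv.symm_apply_apply _ z)

variable {a Y i}

lemma exists_extToLocalCohomology_eq (z : (localCohomology a i).obj Y) :
    ∃ n y, extToLocalCohomology a Y i n y = z := by
  obtain ⟨j, y, rfl⟩ := Concrete.isColimit_exists_rep _ (isColimitLocalCohomologyCocone a Y i) z
  exact ⟨j.unop.unop, _, extToLocalCohomology_localCohomologyDiagramEquiv a Y i y⟩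

lemma extToLocalCohomology_extQuotientMap {m n : ℕ} (h : m ≤ n)
    (y : Abelian.Ext (ModuleCat.of R (R ⧸ a ^ m)) Y i) :
    extToLocalCohomology a Y i n (extQuotientMap (Ideal.pow_le_pow_right h) Y i y) =
      extToLocalCohomology a Y i m y := by
  obtain ⟨y, rfl⟩ := (localCohomologyDiagramEquiv a Y i m).surjective y
  rw [← localCohomologyDiagramEquiv_map, extToLocalCohomology_localCohomologyDiagramEquiv,
    extToLocalCohomology_localCohomologyDiagramEquiv]
  exact ConcreteCategory.congr_hom ((localCohomologyCocone a Y i).w (homOfLE h).op.op) y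

lemma exists_extQuotientMap_eq_zero {m : ℕ} {y : Abelian.Ext (ModuleCat.of R (R ⧸ a ^ m)) Y i}
    (hy : extToLocalCohomology a Y i m y = 0) :
    ∃ (n : ℕ) (h : m ≤ n), extQuotientMap (Ideal.pow_le_pow_right h) Y i y = 0 := by
  obtain ⟨y, rfl⟩ := (localCohomologyDiagramEquiv a Y i m).surjective y
  rw [extToLocalCohomology_localCohomologyDiagramEquiv] at hy
  obtain ⟨k, f, g, hfg⟩ := (Concrete.isColimit_rep_eq_iff_exists _ (j := op (op m))
    (isColimitLocalCohomologyCocone a Y i) y 0).1 (hy.trans (map_zero _).symm)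
  refine ⟨k.unop.unop, leOfHom f.unop.unop, ?_⟩
  rw [← localCohomologyDiagramEquiv_map, LinearEquiv.map_eq_zero_iff]
  exact hfg.trans (map_zero ((localCohomologyDiagram a Y i).map g).hom)

lemma exists_pow_le_torsionOf (z : (localCohomology a i).obj Y) :
    ∃ n, a ^ n ≤ Ideal.torsionOf R ((localCohomology a i).obj Y) z := by
  obtain ⟨n, y, rfl⟩ := exists_extToLocalCohomology_eq z
  refine ⟨n, fun r hr ↦ (Ideal.mem_torsionOf_iff _ _).2 ?_⟩
  rw [← map_smul, smul_ext_eq_zero_of_mem_annihilator (Ideal.annihilator_quotient.ge hr),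
    map_zero]

lemma exists_le_torsionOf_extQuotientMap {b : Ideal R} (hb : b.FG) {m : ℕ}
    {y : Abelian.Ext (ModuleCat.of R (R ⧸ a ^ m)) Y i}
    (hy : b ≤ Ideal.torsionOf R _ (extToLocalCohomology a Y i m y)) :
    ∃ (n : ℕ) (h : m ≤ n),
      b ≤ Ideal.torsionOf R _ (extQuotientMap (Ideal.pow_le_pow_right h) Y i y) := by
  induction b, hb using Submodule.fg_induction with
  | singleton r =>
    rw [Ideal.submodule_span_eq, Ideal.span_singleton_le_iff_mem, Ideal.mem_torsionOf_iff,
      ← map_smul] at hy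
    obtain ⟨n, h, hn⟩ := exists_extQuotientMap_eq_zero hy
    refine ⟨n, h, (Ideal.span_singleton_le_iff_mem _).2 ?_⟩
    rwa [Ideal.mem_torsionOf_iff, ← map_smul]
  | sup b₁ b₂ _ _ ih₁ ih₂ =>
    obtain ⟨n₁, h₁, hn₁⟩ := ih₁ (le_sup_left.trans hy)
    obtain ⟨n₂, h₂, hn₂⟩ := ih₂ (le_sup_right.trans hy)
    refine ⟨max n₁ n₂, h₁.trans (le_max_left n₁ n₂), sup_le ?_ ?_⟩
    · rw [← extQuotientMap_extQuotientMap (Ideal.pow_le_pow_right (le_max_left n₁ n₂))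
        (Ideal.pow_le_pow_right h₁)]
      exact hn₁.trans (torsionOf_le_torsionOf_map _ _)
    · rw [← extQuotientMap_extQuotientMap (Ideal.pow_le_pow_right (le_max_right n₁ n₂))
        (Ideal.pow_le_pow_right h₂)]
      exact hn₂.trans (torsionOf_le_torsionOf_map _ _)

lemma exists_extToLocalCohomology_eq_of_le_torsionOf (ha : a.FG) (z : (localCohomology a i).obj Y)
    (hz : a ≤ Ideal.torsionOf R _ z) :
    ∃ n, 1 ≤ n ∧ ∃ y, extToLocalCohomology a Y i n y = z ∧ a ≤ Ideal.torsionOf R _ y := by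
  obtain ⟨m, y, rfl⟩ := exists_extToLocalCohomology_eq z
  rw [← extToLocalCohomology_extQuotientMap (Nat.le_succ m)] at hz
  obtain ⟨n, h, hn⟩ := exists_le_torsionOf_extQuotientMap ha hz
  refine ⟨n, (Nat.succ_pos m).trans_le h, _, ?_, hn⟩
  rw [extToLocalCohomology_extQuotientMap h,
    extToLocalCohomology_extQuotientMap (Nat.le_succ m)]

end LocalCohomology

section RegularSequenceInIdeal

variable {R : Type u} [CommRing R] {M : ModuleCat.{u} R} {rs : List R}

lemma mem_radical_annihilator_quotient {J : Ideal R} {r : R} (hr : r ∈ J.radical) :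
    r ∈ (Module.annihilator R (ModuleCat.of R (R ⧸ J))).radical := by
  rwa [Ideal.annihilator_quotient]

lemma le_torsionOf_ext_quotient (J : Ideal R) {n : ℕ}
    (z : Abelian.Ext (ModuleCat.of R (R ⧸ J)) M n) : J ≤ Ideal.torsionOf R _ z :=
  fun _ hr ↦ smul_ext_eq_zero_of_mem_annihilator (Ideal.annihilator_quotient.ge hr) z

/-- For a weakly `M`-regular sequence `r₁, …, r_t` in `J`, `homToExt` as an isomorphism from
`Hom(R/J, M/(r₁, …, r_t)M)` to `Ext^t(R/J, M)`. -/
def homQuotientEquivExt (hM : IsWeaklyRegular M rs) {J : Ideal R} (hJ : ∀ r ∈ rs, r ∈ J) :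
    (ModuleCat.of R (R ⧸ J) ⟶ ModuleCat.of R (M ⧸ (Ideal.ofList rs • ⊤ : Submodule R M))) ≃ₗ[R]
      Abelian.Ext (ModuleCat.of R (R ⧸ J)) M rs.length :=
  have hN : ∀ r ∈ rs, r ∈ (Module.annihilator R (ModuleCat.of R (R ⧸ J))).radical :=
    fun r hr ↦ mem_radical_annihilator_quotient (J.le_radical (hJ r hr))
  LinearEquiv.ofBijective (homToExt hM (ModuleCat.of R (R ⧸ J))) ⟨homToExt_injective hM hN,
    fun z ↦ exists_homToExt_eq hM hN z fun r hr ↦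
      (Ideal.mem_torsionOf_iff z r).1 (le_torsionOf_ext_quotient J z (hJ r hr))⟩

theorem associatedPrimes_ext_quotient [IsNoetherianRing R] (hM : IsWeaklyRegular M rs)
    {J : Ideal R} (hJ : ∀ r ∈ rs, r ∈ J) :
    associatedPrimes R (Abelian.Ext (ModuleCat.of R (R ⧸ J)) M rs.length) =
      {p | J ≤ p} ∩ associatedPrimes R (M ⧸ (Ideal.ofList rs • ⊤ : Submodule R M)) := by
  rw [← LinearEquiv.AssociatedPrimes.eq (homQuotientEquivExt hM hJ)]
  exact associatedPrimes_eq_inter_of_range_eq_torsionBySet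
    (quotientHomEval_injective J (ModuleCat.of R (M ⧸ (Ideal.ofList rs • ⊤ : Submodule R M))))
    (range_quotientHomEval J _)

theorem extToLocalCohomology_one_injective (hM : IsWeaklyRegular M rs) {a : Ideal R}
    (hmem : ∀ r ∈ rs, r ∈ a) : Function.Injective (extToLocalCohomology a M rs.length 1) := by
  rw [injective_iff_map_eq_zero]
  intro z hz
  have hmem_pow : ∀ r ∈ rs, r ∈ a ^ 1 := by rwa [pow_one]
  obtain ⟨f, rfl⟩ := (homQuotientEquivExt hM hmem_pow).surjective z
  obtain ⟨n, hn, hzn⟩ := exists_extQuotientMap_eq_zero hz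
  have comp_eq_zero : idealQuotientMap (Ideal.pow_le_pow_right hn) ≫ f = 0 := by
    refine (injective_iff_map_eq_zero _).1 (homToExt_injective hM fun r hr ↦
      mem_radical_annihilator_quotient ⟨n, Ideal.pow_mem_pow (hmem r hr) n⟩) _ ?_
    exact (homToExt_comp hM _ f).trans hzn
  have f_eq_zero : f = 0 := quotientHomEval_injective _ _ <| by
    rw [← quotientHomEval_idealQuotientMap_comp (Ideal.pow_le_pow_right hn), comp_eq_zero,
      map_zero, map_zero]
  rw [f_eq_zero, map_zero]

theorem range_extToLocalCohomology_one (hM : IsWeaklyRegular M rs) {a : Ideal R} (ha : a.FG)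
    (hmem : ∀ r ∈ rs, r ∈ a) :
    LinearMap.range (extToLocalCohomology a M rs.length 1) =
      Submodule.torsionBySet R ((localCohomology a rs.length).obj M) a := by
  ext z
  rw [mem_torsionBySet_iff_le_torsionOf]
  constructor
  · rintro ⟨y, rfl⟩
    exact ((pow_one a).ge.trans (le_torsionOf_ext_quotient _ y)).trans
      (torsionOf_le_torsionOf_map (extToLocalCohomology a M rs.length 1) y)
  · intro hz
    obtain ⟨n, hn, y, rfl, hy⟩ := exists_extToLocalCohomology_eq_of_le_torsionOf ha z hz
    have hN : ∀ r ∈ rs, r ∈ (Module.annihilator R (ModuleCat.of R (R ⧸ a ^ n))).radical :=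
      fun r hr ↦ mem_radical_annihilator_quotient ⟨n, Ideal.pow_mem_pow (hmem r hr) n⟩
    obtain ⟨f, rfl⟩ := exists_homToExt_eq hM hN y fun r hr ↦
      (Ideal.mem_torsionOf_iff y r).1 (hy (hmem r hr))
    obtain ⟨g, hg⟩ := exists_idealQuotientMap_comp_eq (Ideal.pow_le_pow_right hn) f <| by
      rwa [pow_one, ← torsionOf_eq_of_injective (homToExt_injective hM hN)]
    refine ⟨homToExt hM _ g, ?_⟩
    rw [← extToLocalCohomology_extQuotientMap hn, ← hg, homToExt_comp]
    rfl

theorem associatedPrimes_localCohomology [IsNoetherianRing R] (hM : IsWeaklyRegular M rs)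
    {a : Ideal R} (hmem : ∀ r ∈ rs, r ∈ a) :
    associatedPrimes R ((localCohomology a rs.length).obj M) =
      {p | a ≤ p} ∩ associatedPrimes R (M ⧸ (Ideal.ofList rs • ⊤ : Submodule R M)) := by
  have hmem_pow : ∀ r ∈ rs, r ∈ a ^ 1 := by rwa [pow_one]
  have ext_eq_localCohomology :=
    associatedPrimes_eq_inter_of_range_eq_torsionBySet (extToLocalCohomology_one_injective hM hmem)
      (range_extToLocalCohomology_one hM (IsNoetherian.noetherian a) hmem)
  rw [Set.inter_eq_right.2 (associatedPrimes_subset_of_exists_pow_le_torsionOf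
    exists_pow_le_torsionOf)] at ext_eq_localCohomology
  rw [← ext_eq_localCohomology, associatedPrimes_ext_quotient hM hmem_pow, pow_one]

end RegularSequenceInIdeal

theorem stmt14_general {R : Type u} [CommRing R] [IsNoetherianRing R] {M : Type u}
    [AddCommGroup M] [Module R M] (a : Ideal R) (rs : List R) (hmem : ∀ r ∈ rs, r ∈ a)
    (hreg : IsWeaklyRegular M rs) :
    associatedPrimes R ↥((localCohomology a rs.length).obj (ModuleCat.of R M)) =
        associatedPrimes R
          ↥(((Ext R (ModuleCat.{u} R) rs.length).obj
              (Opposite.op (ModuleCat.of R (R ⧸ a)))).obj (ModuleCat.of R M)) ∧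
      associatedPrimes R ↥((localCohomology a rs.length).obj (ModuleCat.of R M)) =
        {p | a ≤ p} ∩
          associatedPrimes R (M ⧸ (Ideal.ofList rs • (⊤ : Submodule R M))) := by
  have associatedPrimes_H := associatedPrimes_localCohomology (M := ModuleCat.of R M) hreg hmem
  refine ⟨associatedPrimes_H.trans ?_, associatedPrimes_H⟩
  rw [LinearEquiv.AssociatedPrimes.eq (extLinearEquiv R (ModuleCat.of R (R ⧸ a)) _ rs.length)]
  exact (associatedPrimes_ext_quotient (M := ModuleCat.of R M) hreg hmem).symm

theorem stmt14 (a : Ideal R) (ha : a • (⊤ : Submodule R M) ≠ ⊤)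
    (rs : List R) (hlen : rs.length = gradeM a M) (hmem : ∀ r ∈ rs, r ∈ a)
    (hreg : RingTheory.Sequence.IsRegular M rs) :
    associatedPrimes R ↥((localCohomology a (gradeM a M)).obj (ModuleCat.of R M)) =
        associatedPrimes R
          ↥(((Ext R (ModuleCat.{u} R) (gradeM a M)).obj
              (Opposite.op (ModuleCat.of R (R ⧸ a)))).obj (ModuleCat.of R M)) ∧
      associatedPrimes R ↥((localCohomology a (gradeM a M)).obj (ModuleCat.of R M)) =
        {p | a ≤ p} ∩
          associatedPrimes R (M ⧸ (Ideal.ofList rs • (⊤ : Submodule R M))) :=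
  hlen ▸ stmt14_general a rs hmem hreg.toIsWeaklyRegular
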